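/- Let C be a regular Ord-category, R: X ↬ Y and T: A ↬ B ideals, and g: B→Y, f: A→X morphisms. Then g_*∘T∘f^* ⊆ R if and only if T ⊆ g^*∘R∘f_*. -/

import Mathlib

open CategoryTheory

universe w v u

/-- An `Ord`-enrichment of a category: a preorder on each hom-set,
preserved by composition on both sides. -/
class OrdEnrichment (C : Type u) [Category.{v} C] : Type (max u v) where
  ord : ∀ {X Y : C}, (X ⟶ Y) → (X ⟶ Y) → Prop
  ord_refl : ∀ {X Y : C} (f : X ⟶ Y), ord f f
  ord_trans : ∀ {X Y : C} {f g h : X ⟶ Y}, ord f g → ord g h → ord f h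
  precomp_ord : ∀ {X Y Z : C} (e : X ⟶ Y) {f g : Y ⟶ Z}, ord f g → ord (e ≫ f) (e ≫ g)
  postcomp_ord : ∀ {X Y Z : C} {f g : X ⟶ Y} (h : Y ⟶ Z), ord f g → ord (f ≫ h) (g ≫ h)

/-- The preorder on hom-sets of an `Ord`-category. -/
def homLe {C : Type u} [Category.{v} C] [OrdEnrichment C] {X Y : C} (f g : X ⟶ Y) : Prop :=
  OrdEnrichment.ord f g

infixl:50 " ≼ " => homLe

section

variable {C : Type u} [Category.{v} C] [OrdEnrichment C]

/-- A full (ff-) morphism. -/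
def IsFF {X Y : C} (m : X ⟶ Y) : Prop :=
  ∀ {A : C} (a a' : A ⟶ X), (a ≫ m) ≼ (a' ≫ m) → a ≼ a'

/-- An ff-monomorphism: a full monomorphism. -/
def IsFFMono {X Y : C} (m : X ⟶ Y) : Prop := IsFF m ∧ Mono m

/-- An so-morphism: a morphism left orthogonal to every ff-monomorphism. -/
def IsSO {A B : C} (e : A ⟶ B) : Prop :=
  ∀ {X Y : C} (m : X ⟶ Y), IsFFMono m → ∀ (u : A ⟶ X) (v : B ⟶ Y),
    u ≫ m = e ≫ v → ∃ d : B ⟶ X, e ≫ d = u ∧ d ≫ m = v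

/-- The (strict) comma object square for the ordered pair `(f, g)`. -/
structure IsCommaSq {X Y Z : C} (f : X ⟶ Y) (g : Z ⟶ Y) (P : C)
    (π₁ : P ⟶ X) (π₂ : P ⟶ Z) : Prop where
  le : (π₁ ≫ f) ≼ (π₂ ≫ g)
  lift : ∀ {A : C} (α : A ⟶ X) (β : A ⟶ Z), (α ≫ f) ≼ (β ≫ g) →
    ∃! h : A ⟶ P, h ≫ π₁ = α ∧ h ≫ π₂ = β
  lift_ord : ∀ {A : C} {h h' : A ⟶ P}, (h ≫ π₁) ≼ (h' ≫ π₁) → (h ≫ π₂) ≼ (h' ≫ π₂) → h ≼ h'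

/-- A 2-pullback square (pullback with the `Ord`-enriched universal property). -/
structure Is2Pullback {X Y Z : C} (f : X ⟶ Z) (g : Y ⟶ Z) (P : C)
    (p : P ⟶ X) (q : P ⟶ Y) : Prop where
  comm : p ≫ f = q ≫ g
  lift : ∀ {A : C} (a : A ⟶ X) (b : A ⟶ Y), a ≫ f = b ≫ g →
    ∃! h : A ⟶ P, h ≫ p = a ∧ h ≫ q = b
  lift_ord : ∀ {A : C} {h h' : A ⟶ P}, (h ≫ p) ≼ (h' ≫ p) → (h ≫ q) ≼ (h' ≫ q) → h ≼ h'

/-- A binary 2-product. -/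
structure Is2Product (X Y : C) (P : C) (p : P ⟶ X) (q : P ⟶ Y) : Prop where
  lift : ∀ {A : C} (a : A ⟶ X) (b : A ⟶ Y), ∃! h : A ⟶ P, h ≫ p = a ∧ h ≫ q = b
  lift_ord : ∀ {A : C} {h h' : A ⟶ P}, (h ≫ p) ≼ (h' ≫ p) → (h ≫ q) ≼ (h' ≫ q) → h ≼ h'

/-- A 2-equalizer. -/
structure Is2Equalizer {X Y : C} (f g : X ⟶ Y) (E : C) (i : E ⟶ X) : Prop where
  comm : i ≫ f = i ≫ g
  lift : ∀ {A : C} (a : A ⟶ X), a ≫ f = a ≫ g → ∃! h : A ⟶ E, h ≫ i = a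
  lift_ord : ∀ {A : C} {h h' : A ⟶ E}, (h ≫ i) ≼ (h' ≫ i) → h ≼ h'

/-- A bicoinserter of a parallel pair. -/
structure IsBicoinserter {X A E : C} (a b : X ⟶ A) (e : A ⟶ E) : Prop where
  le : (a ≫ e) ≼ (b ≫ e)
  desc : ∀ {F : C} (f : A ⟶ F), (a ≫ f) ≼ (b ≫ f) →
    ∃ t : E ⟶ F, (e ≫ t) ≼ f ∧ f ≼ (e ≫ t)
  desc_ord : ∀ {F : C} {f f' : A ⟶ F} {t t' : E ⟶ F},
    (e ≫ t) ≼ f → f ≼ (e ≫ t) → (e ≫ t') ≼ f' → f' ≼ (e ≫ t') → f ≼ f' → t ≼ t'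

/-- A relation from `X` to `Y` in an `Ord`-category: a jointly ff-monomorphic span. -/
structure RelStr (X Y : C) : Type (max u v) where
  obj : C
  p : obj ⟶ X
  q : obj ⟶ Y
  jointly_ff : ∀ {A : C} (a a' : A ⟶ obj), (a ≫ p) ≼ (a' ≫ p) → (a ≫ q) ≼ (a' ≫ q) → a ≼ a'
  jointly_mono : ∀ {A : C} (a a' : A ⟶ obj), a ≫ p = a' ≫ p → a ≫ q = a' ≫ q → a = a'

/-- `(x, y) ∈_A R`. -/
def RelStr.Mem {X Y : C} (R : RelStr X Y) {A : C} (x : A ⟶ X) (y : A ⟶ Y) : Prop :=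
  ∃ h : A ⟶ R.obj, h ≫ R.p = x ∧ h ≫ R.q = y

/-- `R ⊆ S`: `R` factors through `S` (over `X × Y`). -/
def RelStr.Sub {X Y : C} (R S : RelStr X Y) : Prop :=
  ∃ φ : R.obj ⟶ S.obj, φ ≫ S.p = R.p ∧ φ ≫ S.q = R.q

/-- `R ≅ S`: mutual factorisation. -/
def RelStr.Iso {X Y : C} (R S : RelStr X Y) : Prop := R.Sub S ∧ S.Sub R

/-- The opposite relation `R°`. -/
def RelStr.op {X Y : C} (R : RelStr X Y) : RelStr Y X where
  obj := R.obj
  p := R.q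
  q := R.p
  jointly_ff := fun a a' h1 h2 => R.jointly_ff a a' h2 h1
  jointly_mono := fun a a' h1 h2 => R.jointly_mono a a' h2 h1

/-- A relation is an (order) ideal when it is closed under lowering the first
coordinate and raising the second coordinate. -/
def IsIdealRel {X Y : C} (R : RelStr X Y) : Prop :=
  ∀ {A : C} (x x' : A ⟶ X) (y y' : A ⟶ Y), x' ≼ x → R.Mem x y → y ≼ y' → R.Mem x' y'

/-- The relation `f_♯` given by the span `(1_X, f)`. -/
def sharpRel {X Y : C} (f : X ⟶ Y) : RelStr X Y where
  obj := X
  p := 𝟙 X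
  q := f
  jointly_ff := fun a a' h1 _ => by simpa using h1
  jointly_mono := fun a a' h1 _ => by simpa using h1

/-- The relation `f°`, the opposite of `f_♯`. -/
def cosharpRel {X Y : C} (f : X ⟶ Y) : RelStr Y X := (sharpRel f).op

/-- `M` is the meet (intersection) `R ∧ S` of two relations. -/
def IsMeetRel {X Y : C} (R S M : RelStr X Y) : Prop :=
  M.Sub R ∧ M.Sub S ∧
    ∀ {A : C} (x : A ⟶ X) (y : A ⟶ Y), R.Mem x y → S.Mem x y → M.Mem x y

/-- `T` is the composite `S ∘ R` of the relations `R : X ↬ Y` and `S : Y ↬ Z`,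
obtained via the (so-morphism, ff-monomorphism) factorisation of the span
given by the 2-pullback over the middle object. -/
def IsCompositeRel {X Y Z : C} (R : RelStr X Y) (S : RelStr Y Z) (T : RelStr X Z) : Prop :=
  ∃ (P : C) (p₁ : P ⟶ R.obj) (p₂ : P ⟶ S.obj) (e : P ⟶ T.obj),
    Is2Pullback R.q S.p P p₁ p₂ ∧ IsSO e ∧ e ≫ T.p = p₁ ≫ R.p ∧ e ≫ T.q = p₂ ≫ S.q

/-- `R` is the ideal `f_* = f / 1_Y : X ↬ Y`. -/
def IsStarRel {X Y : C} (f : X ⟶ Y) (R : RelStr X Y) : Prop :=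
  IsCommaSq f (𝟙 Y) R.obj R.p R.q

/-- `R` is the ideal `f^* = 1_Y / f : Y ↬ X`. -/
def IsCostarRel {X Y : C} (f : X ⟶ Y) (R : RelStr Y X) : Prop :=
  IsCommaSq (𝟙 Y) f R.obj R.p R.q

/-- `R` is the identity ideal `I_X = 1_X / 1_X`. -/
def IsIdRel (X : C) (R : RelStr X X) : Prop :=
  IsCommaSq (𝟙 X) (𝟙 X) R.obj R.p R.q

/-- `S` is the 2-pullback of the relation `R ↣ X × Y` along `f × g`. -/
def IsRelPullback {X Y U V : C} (R : RelStr X Y) (f : U ⟶ X) (g : V ⟶ Y)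
    (S : RelStr U V) : Prop :=
  ∃ h : S.obj ⟶ R.obj, h ≫ R.p = S.p ≫ f ∧ h ≫ R.q = S.q ≫ g ∧
    ∀ {A : C} (a : A ⟶ U) (b : A ⟶ V) (c : A ⟶ R.obj),
      c ≫ R.p = a ≫ f → c ≫ R.q = b ≫ g →
      ∃ d : A ⟶ S.obj, d ≫ S.p = a ∧ d ≫ S.q = b ∧ d ≫ h = c

/-- A binary 2-coproduct. -/
structure Is2Coproduct (X Y : C) (P : C) (i : X ⟶ P) (j : Y ⟶ P) : Prop where
  desc : ∀ {A : C} (a : X ⟶ A) (b : Y ⟶ A), ∃! h : P ⟶ A, i ≫ h = a ∧ j ≫ h = b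
  desc_ord : ∀ {A : C} {h h' : P ⟶ A}, (i ≫ h) ≼ (i ≫ h') → (j ≫ h) ≼ (j ≫ h') → h ≼ h'

/-- A ternary 2-coproduct. -/
structure Is3Coproduct (X Y Z : C) (P : C) (i : X ⟶ P) (j : Y ⟶ P) (k : Z ⟶ P) : Prop where
  desc : ∀ {A : C} (a : X ⟶ A) (b : Y ⟶ A) (c : Z ⟶ A),
    ∃! h : P ⟶ A, i ≫ h = a ∧ j ≫ h = b ∧ k ≫ h = c
  desc_ord : ∀ {A : C} {h h' : P ⟶ A},
    (i ≫ h) ≼ (i ≫ h') → (j ≫ h) ≼ (j ≫ h') → (k ≫ h) ≼ (k ≫ h') → h ≼ h'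

/-- Reflexivity of a relation on `X`: the diagonal factors through it. -/
def ReflexiveRel {X : C} (R : RelStr X X) : Prop := R.Mem (𝟙 X) (𝟙 X)

/-- Transitivity of a relation on `X`: `R ∘ R ⊆ R`. -/
def TransitiveRel {X : C} (R : RelStr X X) : Prop :=
  ∀ T : RelStr X X, IsCompositeRel R R T → T.Sub R

/-- A congruence: a reflexive and transitive ideal. -/
def IsCongruence {X : C} (R : RelStr X X) : Prop :=
  IsIdealRel R ∧ ReflexiveRel R ∧ TransitiveRel R

/-- An effective congruence: `R ≅ f^* ∘ f_*` for some morphism `f`. -/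
def EffectiveCongruence {X : C} (R : RelStr X X) : Prop :=
  ∃ (Y : C) (f : X ⟶ Y) (Fstar : RelStr X Y) (Fco : RelStr Y X) (T : RelStr X X),
    IsStarRel f Fstar ∧ IsCostarRel f Fco ∧ IsCompositeRel Fstar Fco T ∧ R.Iso T

/-- The `Ord`-enriched difunctionality property of a relation. -/
def OrdDifunctional {X Y : C} (D : RelStr X Y) : Prop :=
  ∀ {A : C} (x u u' : A ⟶ X) (y y' v : A ⟶ Y),
    D.Mem x y → y ≼ y' → D.Mem u y' → u ≼ u' → D.Mem u' v → D.Mem x v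

end

/-- A regular `Ord`-category: finite weighted limits, an
(so-morphism, ff-monomorphism) factorisation system, so-morphisms stable under
2-pullbacks, and every so-morphism the bicoinserter of its comma object projections. -/
structure IsRegularOrd (C : Type u) [Category.{v} C] [OrdEnrichment C] : Prop where
  hasTerminal : ∃ T : C, ∀ A : C, ∃ f : A ⟶ T, ∀ g : A ⟶ T, g = f
  has2Products : ∀ X Y : C, ∃ (P : C) (p : P ⟶ X) (q : P ⟶ Y), Is2Product X Y P p q
  has2Equalizers : ∀ {X Y : C} (f g : X ⟶ Y), ∃ (E : C) (i : E ⟶ X), Is2Equalizer f g E i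
  has2Pullbacks : ∀ {X Y Z : C} (f : X ⟶ Z) (g : Y ⟶ Z),
    ∃ (P : C) (p : P ⟶ X) (q : P ⟶ Y), Is2Pullback f g P p q
  hasCommaObjects : ∀ {X Y Z : C} (f : X ⟶ Y) (g : Z ⟶ Y),
    ∃ (P : C) (p : P ⟶ X) (q : P ⟶ Z), IsCommaSq f g P p q
  fact : ∀ {X Y : C} (f : X ⟶ Y), ∃ (I : C) (e : X ⟶ I) (m : I ⟶ Y),
    IsSO e ∧ IsFFMono m ∧ e ≫ m = f
  so_pullback_stable : ∀ {X Y Z P : C} (f : X ⟶ Z) (g : Y ⟶ Z) (p : P ⟶ X) (q : P ⟶ Y),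
    Is2Pullback f g P p q → IsSO g → IsSO p
  so_bicoinserter : ∀ {A B P : C} (e : A ⟶ B), IsSO e →
    ∀ (π₁ π₂ : P ⟶ A), IsCommaSq e e P π₁ π₂ → IsBicoinserter π₁ π₂ e

/-- An `Ord`-Mal'tsev category: every ideal is `Ord`-difunctional. -/
def IsOrdMaltsev (C : Type u) [Category.{v} C] [OrdEnrichment C] : Prop :=
  ∀ (X Y : C) (D : RelStr X Y), IsIdealRel D → OrdDifunctional D

/-- An `Ord`-W-Mal'tsev object: every ideal is `Ord`-difunctional with respect to
generalised elements with domain `Y`. -/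
def IsOrdWMaltsevObj {C : Type u} [Category.{v} C] [OrdEnrichment C] (Y : C) : Prop :=
  ∀ (X Z : C) (R : RelStr X Z), IsIdealRel R →
    ∀ (x u u' : Y ⟶ X) (z z' v : Y ⟶ Z),
      R.Mem x z → z ≼ z' → R.Mem u z' → u ≼ u' → R.Mem u' v → R.Mem x v

/-!
Both inclusions say that `f × g` carries `T` into `R`: `(a, b) ∈ T` implies `(a f, b g) ∈ R`.
Membership in a fixed relation descends along so-morphisms, so a composite `S ∘ R` is carried into
`U` as soon as all pairs `(x, z)` with an honest middle element `(x, y) ∈ R`, `(y, z) ∈ S` are.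
On the left, the middle elements come with inequalities `x ≼ a f` and `b g ≼ y`, which `R`, being an
ideal, absorbs. On the right, the same argument shows that `g^* ∘ R ∘ f_*` is the pullback of `R`
along `f × g`.
-/

section

open Limits

variable {C : Type u} [Category.{v} C] [OrdEnrichment C]

section HomOrder

variable {X Y Z : C}

theorem homLe.refl (f : X ⟶ Y) : f ≼ f := OrdEnrichment.ord_refl f

theorem homLe.trans {f g h : X ⟶ Y} (hfg : f ≼ g) (hgh : g ≼ h) : f ≼ h :=
  OrdEnrichment.ord_trans hfg hgh

theorem homLe.precomp (e : X ⟶ Y) {f g : Y ⟶ Z} (h : f ≼ g) : (e ≫ f) ≼ (e ≫ g) :=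
  OrdEnrichment.precomp_ord e h

theorem homLe.postcomp {f g : X ⟶ Y} (h : f ≼ g) (k : Y ⟶ Z) : (f ≫ k) ≼ (g ≫ k) :=
  OrdEnrichment.postcomp_ord k h

end HomOrder

theorem Is2Product.hasBinaryProduct {X Y P : C} {p : P ⟶ X} {q : P ⟶ Y}
    (h : Is2Product X Y P p q) : HasBinaryProduct X Y :=
  ⟨⟨BinaryFan.mk p q, BinaryFan.IsLimit.mk _ (fun a b => (h.lift a b).choose)
    (fun a b => (h.lift a b).choose_spec.1.1) (fun a b => (h.lift a b).choose_spec.1.2)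
    (fun a b m hp hq => (h.lift a b).choose_spec.2 m ⟨hp, hq⟩)⟩⟩

theorem IsRegularOrd.hasBinaryProducts (hC : IsRegularOrd C) : HasBinaryProducts C :=
  have (X Y : C) : HasBinaryProduct X Y := by
    obtain ⟨_, _, _, h⟩ := hC.has2Products X Y
    exact h.hasBinaryProduct
  hasBinaryProducts_of_hasLimit_pair C

namespace RelStr

variable {X Y A B : C}

theorem mem_p_q (R : RelStr X Y) : R.Mem R.p R.q :=
  ⟨𝟙 _, Category.id_comp _, Category.id_comp _⟩

theorem Mem.precomp {R : RelStr X Y} {W W' : C} {x : W ⟶ X} {y : W ⟶ Y} (h : R.Mem x y)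
    (e : W' ⟶ W) : R.Mem (e ≫ x) (e ≫ y) := by
  obtain ⟨k, rfl, rfl⟩ := h
  exact ⟨e ≫ k, Category.assoc _ _ _, Category.assoc _ _ _⟩

theorem isFFMono_prodLift [HasBinaryProduct X Y] (R : RelStr X Y) :
    IsFFMono (prod.lift R.p R.q) := by
  refine ⟨fun a a' hle => R.jointly_ff a a' ?_ ?_, ⟨fun a a' heq => R.jointly_mono a a' ?_ ?_⟩⟩
  · simpa only [Category.assoc, prod.lift_fst] using hle.postcomp prod.fst
  · simpa only [Category.assoc, prod.lift_snd] using hle.postcomp prod.snd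
  · simpa only [Category.assoc, prod.lift_fst] using heq =≫ prod.fst
  · simpa only [Category.assoc, prod.lift_snd] using heq =≫ prod.snd

theorem Mem.of_isSO_precomp [HasBinaryProduct X Y] {R : RelStr X Y} {W W' : C} {e : W' ⟶ W}
    (he : IsSO e) {x : W ⟶ X} {y : W ⟶ Y} (h : R.Mem (e ≫ x) (e ≫ y)) : R.Mem x y := by
  obtain ⟨k, hp, hq⟩ := h
  obtain ⟨d, -, hd⟩ := he _ R.isFFMono_prodLift k (prod.lift x y) (by simp [hp, hq])
  exact ⟨d, by simpa only [Category.assoc, prod.lift_fst] using hd =≫ prod.fst,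
    by simpa only [Category.assoc, prod.lift_snd] using hd =≫ prod.snd⟩

/-- `f × g` carries the relation `T` into `R`. The condition is imposed on the generic element
`(T.p, T.q)` only, which gives it for all generalised elements (`mapsTo_iff`). -/
def MapsTo (T : RelStr A B) (f : A ⟶ X) (g : B ⟶ Y) (R : RelStr X Y) : Prop :=
  R.Mem (T.p ≫ f) (T.q ≫ g)

theorem mapsTo_iff {T : RelStr A B} {f : A ⟶ X} {g : B ⟶ Y} {R : RelStr X Y} :
    T.MapsTo f g R ↔
      ∀ {W : C} (a : W ⟶ A) (b : W ⟶ B), T.Mem a b → R.Mem (a ≫ f) (b ≫ g) := by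
  refine ⟨fun h W a b => ?_, fun h => h _ _ T.mem_p_q⟩
  rintro ⟨k, rfl, rfl⟩
  simpa using h.precomp k

theorem mapsTo_id_iff_sub {T R : RelStr X Y} : T.MapsTo (𝟙 X) (𝟙 Y) R ↔ T.Sub R := by
  simp only [MapsTo, Category.comp_id]
  exact Iff.rfl

end RelStr

section Comma

variable {X Y Z W : C}

theorem IsCommaSq.mem_iff {f : X ⟶ Y} {g : Z ⟶ Y} {R : RelStr X Z}
    (h : IsCommaSq f g R.obj R.p R.q) {x : W ⟶ X} {z : W ⟶ Z} :
    R.Mem x z ↔ (x ≫ f) ≼ (z ≫ g) := by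
  refine ⟨?_, fun hle => (h.lift x z hle).exists⟩
  rintro ⟨k, rfl, rfl⟩
  simpa using h.le.precomp k

theorem IsStarRel.mem_iff {f : X ⟶ Y} {F : RelStr X Y} (h : IsStarRel f F) {x : W ⟶ X}
    {y : W ⟶ Y} : F.Mem x y ↔ (x ≫ f) ≼ y := by
  simpa using IsCommaSq.mem_iff h (x := x) (z := y)

theorem IsCostarRel.mem_iff {f : X ⟶ Y} {F : RelStr Y X} (h : IsCostarRel f F) {y : W ⟶ Y}
    {x : W ⟶ X} : F.Mem y x ↔ y ≼ (x ≫ f) := by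
  simpa using IsCommaSq.mem_iff h (x := y) (z := x)

end Comma

namespace IsCompositeRel

variable {X Y Z U V : C} {R : RelStr X Y} {S : RelStr Y Z} {T : RelStr X Z}

theorem mem (h : IsCompositeRel R S T) {W : C} {x : W ⟶ X} {y : W ⟶ Y} {z : W ⟶ Z}
    (hR : R.Mem x y) (hS : S.Mem y z) : T.Mem x z := by
  obtain ⟨P, p₁, p₂, e, hP, -, hp, hq⟩ := h
  obtain ⟨a, rfl, rfl⟩ := hR
  obtain ⟨b, hb, rfl⟩ := hS
  obtain ⟨l, rfl, rfl⟩ := (hP.lift a b hb.symm).exists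
  exact ⟨l ≫ e, by simp [hp], by simp [hq]⟩

/-- Only elements of `T` with an actual middle element need testing, since they cover `T`. -/
theorem mapsTo_iff [HasBinaryProduct U V] (h : IsCompositeRel R S T) {f : X ⟶ U} {g : Z ⟶ V}
    {M : RelStr U V} :
    T.MapsTo f g M ↔ ∀ {W : C} (x : W ⟶ X) (y : W ⟶ Y) (z : W ⟶ Z),
      R.Mem x y → S.Mem y z → M.Mem (x ≫ f) (z ≫ g) := by
  refine ⟨fun hT _ x _ z hR hS => RelStr.mapsTo_iff.1 hT x z (h.mem hR hS), fun H => ?_⟩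
  obtain ⟨P, p₁, p₂, e, hP, he, hp, hq⟩ := h
  have hS : S.Mem (p₁ ≫ R.q) (p₂ ≫ S.q) := hP.comm ▸ S.mem_p_q.precomp p₂
  refine .of_isSO_precomp he ?_
  rw [← Category.assoc, ← Category.assoc, hp, hq]
  exact H _ _ _ (R.mem_p_q.precomp p₁) hS

end IsCompositeRel

section Ideal

variable {X Y A B : C} [HasBinaryProduct X Y] {R : RelStr X Y} {f : A ⟶ X} {g : B ⟶ Y}

theorem IsCompositeRel.mapsTo_iff_of_star (hR : IsIdealRel R) {G : RelStr B Y}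
    (hG : IsStarRel g G) {S : RelStr A B} {P : RelStr A Y} (hP : IsCompositeRel S G P) :
    P.MapsTo f (𝟙 Y) R ↔ S.MapsTo f g R := by
  rw [hP.mapsTo_iff, RelStr.mapsTo_iff]
  simp only [hG.mem_iff, Category.comp_id]
  exact ⟨fun H _ a b hS => H a b _ hS (.refl _),
    fun H _ a b y hS hy => hR _ _ _ _ (.refl _) (H a b hS) hy⟩

theorem IsCompositeRel.mapsTo_iff_of_costar (hR : IsIdealRel R) {F : RelStr X A}
    (hF : IsCostarRel f F) {S : RelStr A B} {P : RelStr X B} (hP : IsCompositeRel F S P) :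
    P.MapsTo (𝟙 X) g R ↔ S.MapsTo f g R := by
  rw [hP.mapsTo_iff, RelStr.mapsTo_iff]
  simp only [hF.mem_iff, Category.comp_id]
  exact ⟨fun H _ a b hS => H _ a b (.refl _) hS,
    fun H _ x a b hx hS => hR _ _ _ _ hx (H a b hS) (.refl _)⟩

end Ideal

section RelPullback

variable {X Y A B : C} {R : RelStr X Y} {f : A ⟶ X} {g : B ⟶ Y}

theorem isRelPullback_iff {S : RelStr A B} :
    IsRelPullback R f g S ↔
      ∀ {W : C} (a : W ⟶ A) (b : W ⟶ B), S.Mem a b ↔ R.Mem (a ≫ f) (b ≫ g) := by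
  constructor
  · rintro ⟨h, hp, hq, lift⟩ W a b
    refine ⟨RelStr.mapsTo_iff.1 ⟨h, hp, hq⟩ a b, fun ⟨c, hcp, hcq⟩ => ?_⟩
    obtain ⟨d, hdp, hdq, -⟩ := lift a b c hcp hcq
    exact ⟨d, hdp, hdq⟩
  · intro H
    obtain ⟨h, hp, hq⟩ := (H S.p S.q).1 S.mem_p_q
    refine ⟨h, hp, hq, fun a b c hcp hcq => ?_⟩
    obtain ⟨d, rfl, rfl⟩ := (H a b).2 ⟨c, hcp, hcq⟩
    exact ⟨d, rfl, rfl, R.jointly_mono _ _ (by simp [hp, hcp]) (by simp [hq, hcq])⟩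

theorem IsRelPullback.sub_iff_mapsTo {S : RelStr A B} (hS : IsRelPullback R f g S)
    {T : RelStr A B} : T.Sub S ↔ T.MapsTo f g R :=
  isRelPullback_iff.1 hS T.p T.q

theorem IsCompositeRel.isRelPullback_of_star [HasBinaryProduct X Y] (hR : IsIdealRel R)
    {F : RelStr A X} (hF : IsStarRel f F) {Q : RelStr A Y} (hQ : IsCompositeRel F R Q) :
    IsRelPullback R f (𝟙 Y) Q := by
  refine isRelPullback_iff.2 fun a y => ⟨RelStr.mapsTo_iff.1 (hQ.mapsTo_iff.2 ?_) a y, fun h => ?_⟩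
  · intro _ a x y hax hxy
    rw [Category.comp_id]
    exact hR _ _ _ _ (hF.mem_iff.1 hax) hxy (.refl _)
  · exact hQ.mem (hF.mem_iff.2 (.refl _)) (Category.comp_id y ▸ h)

theorem IsCompositeRel.isRelPullback_of_costar [HasBinaryProduct X Y] (hR : IsIdealRel R)
    {G : RelStr Y B} (hG : IsCostarRel g G) {S : RelStr A Y} (hS : IsRelPullback R f (𝟙 Y) S)
    {Q : RelStr A B} (hQ : IsCompositeRel S G Q) : IsRelPullback R f g Q := by
  have mem_S {W : C} (a : W ⟶ A) (y : W ⟶ Y) : S.Mem a y ↔ R.Mem (a ≫ f) y := by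
    simpa using isRelPullback_iff.1 hS a y
  refine isRelPullback_iff.2 fun a b => ⟨RelStr.mapsTo_iff.1 (hQ.mapsTo_iff.2 ?_) a b, fun h => ?_⟩
  · intro _ a y b hay hyb
    exact hR _ _ _ _ (.refl _) ((mem_S a y).1 hay) (hG.mem_iff.1 hyb)
  · exact hQ.mem ((mem_S a _).2 h) (hG.mem_iff.2 (.refl _))

end RelPullback

theorem statement5_general {X Y A B : C} [HasBinaryProduct X Y]
    (R : RelStr X Y) (hR : IsIdealRel R) (T : RelStr A B) (g : B ⟶ Y) (f : A ⟶ X)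
    (Gstar : RelStr B Y) (hGstar : IsStarRel g Gstar)
    (Gco : RelStr Y B) (hGco : IsCostarRel g Gco)
    (Fstar : RelStr A X) (hFstar : IsStarRel f Fstar)
    (Fco : RelStr X A) (hFco : IsCostarRel f Fco)
    (P1 : RelStr X B) (hP1 : IsCompositeRel Fco T P1)
    (P2 : RelStr X Y) (hP2 : IsCompositeRel P1 Gstar P2)
    (Q1 : RelStr A Y) (hQ1 : IsCompositeRel Fstar R Q1)
    (Q2 : RelStr A B) (hQ2 : IsCompositeRel Q1 Gco Q2) :
    P2.Sub R ↔ T.Sub Q2 := by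
  have hQ2R : IsRelPullback R f g Q2 :=
    hQ2.isRelPullback_of_costar hR hGco (hQ1.isRelPullback_of_star hR hFstar)
  calc P2.Sub R
      ↔ P2.MapsTo (𝟙 X) (𝟙 Y) R := RelStr.mapsTo_id_iff_sub.symm
    _ ↔ P1.MapsTo (𝟙 X) g R := hP2.mapsTo_iff_of_star hR hGstar
    _ ↔ T.MapsTo f g R := hP1.mapsTo_iff_of_costar hR hFco
    _ ↔ T.Sub Q2 := hQ2R.sub_iff_mapsTo.symm

end

/-- Adjunction-type property: `g_* ∘ T ∘ f^* ⊆ R ↔ T ⊆ g^* ∘ R ∘ f_*`. -/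
theorem statement5 {C : Type u} [Category.{v} C] [OrdEnrichment C] (hC : IsRegularOrd C)
    {X Y A B : C} (R : RelStr X Y) (hR : IsIdealRel R)
    (T : RelStr A B) (hT : IsIdealRel T)
    (g : B ⟶ Y) (f : A ⟶ X)
    (Gstar : RelStr B Y) (hGstar : IsStarRel g Gstar)
    (Gco : RelStr Y B) (hGco : IsCostarRel g Gco)
    (Fstar : RelStr A X) (hFstar : IsStarRel f Fstar)
    (Fco : RelStr X A) (hFco : IsCostarRel f Fco)
    (P1 : RelStr X B) (hP1 : IsCompositeRel Fco T P1)
    (P2 : RelStr X Y) (hP2 : IsCompositeRel P1 Gstar P2)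
    (Q1 : RelStr A Y) (hQ1 : IsCompositeRel Fstar R Q1)
    (Q2 : RelStr A B) (hQ2 : IsCompositeRel Q1 Gco Q2) :
    P2.Sub R ↔ T.Sub Q2 := by
  have := hC.hasBinaryProducts
  exact statement5_general R hR T g f Gstar hGstar Gco hGco Fstar hFstar Fco hFco P1 hP1 P2 hP2
    Q1 hQ1 Q2 hQ2
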